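/- arXiv:1809.03673 — 2 statements merged into one kernel-verified Lean document; each statement's English description precedes it below -/
import Mathlib

section
/- For each α ∈ {1, 2} and every nonnegative integer N, the equation αx² + (3y² − 2y) + (3z² − 2z) = N has an integer solution (x, y, z) ∈ ℤ³. That is, the ternary mixed sums x²+P₈(y)+P₈(z) and 2x²+P₈(y)+P₈(z) of generalized 4- and 8-gonal numbers are universal. -/
/-!
Since `3 (3 y² - 2 y) + 1 = (3 y - 1)²`, and since `u² + v² ≡ 2 (mod 3)` forces `u` and `v` to be
prime to `3`, it suffices to represent `n = 3 N + 2` by `x² + y² + D z²` with `D = 3 α`.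

For this, Dirichlet's theorem provides a prime `p = b n - D` with `-b` a square modulo `p`, say
`A p = s² + b`. The positive definite form `A x² + 2 s x y + p y² + 2 x z + n z²` then represents
`n`, has determinant `D`, represents the odd number `p`, and modulo `3` is anisotropic up to its
radical. Hermite reduction shows that for `D ≤ 6` these properties force it to be equivalent to
`x² + y² + D z²`. For `D = 6` and `n = 2 m` one instead doubles a representation
`m = x² + y² + 3 z²`, as `2 (x² + y²) = (x + y)² + (x - y)²`.
-/

open Matrix

theorem isSymm_of_posDef {ι R : Type*} [Ring R] [PartialOrder R] [StarRing R] [TrivialStar R]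
    {M : Matrix ι ι R} (hM : M.PosDef) : M.IsSymm :=
  isHermitian_iff_isSymm.1 hM.isHermitian

section Congruence

variable {ι R : Type*} [Fintype ι] [CommRing R]

/-- The quadratic form `v ↦ v ⬝ᵥ M *ᵥ v` with Gram matrix `M` takes the value `r`. -/
def Represents (M : Matrix ι ι R) (r : R) : Prop :=
  ∃ v : ι → R, v ⬝ᵥ M *ᵥ v = r

/-- The quadratic form that `M` induces modulo `q` is anisotropic on the quotient by its radical:
every vector that is isotropic modulo `q` is orthogonal modulo `q` to all vectors. -/
def IsAnisotropicModRadical (M : Matrix ι ι R) (q : R) : Prop :=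
  ∀ v : ι → R, q ∣ v ⬝ᵥ M *ᵥ v → ∀ w : ι → R, q ∣ w ⬝ᵥ M *ᵥ v

theorem dotProduct_transpose_mul_mul_mulVec (U M : Matrix ι ι R) (v w : ι → R) :
    v ⬝ᵥ (Uᵀ * M * U) *ᵥ w = (U *ᵥ v) ⬝ᵥ M *ᵥ (U *ᵥ w) := by
  rw [← mulVec_mulVec, ← mulVec_mulVec, dotProduct_mulVec, vecMul_transpose]

theorem even_dotProduct_mulVec {M : Matrix ι ι ℤ} (hsymm : M.IsSymm) (heven : ∀ i, Even (M i i))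
    (v : ι → ℤ) : Even (v ⬝ᵥ M *ᵥ v) := by
  have expand : v ⬝ᵥ M *ᵥ v = ∑ ij : ι × ι, v ij.1 * (M ij.1 ij.2 * v ij.2) := by
    simp only [dotProduct, mulVec, Finset.mul_sum, Fintype.sum_prod_type]
  rw [expand, ← ZMod.intCast_eq_zero_iff_even, Int.cast_sum]
  -- Off-diagonal terms cancel in pairs modulo two.
  refine Finset.sum_involution (fun ij _ ↦ ij.swap) ?_ ?_ (by simp) (by simp)
  · rintro ⟨i, j⟩ -
    rw [Prod.fst_swap, Prod.snd_swap, hsymm.apply i j, ← Int.cast_add,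
      ZMod.intCast_eq_zero_iff_even]
    exact ⟨v i * (M i j * v j), by ring⟩
  · rintro ⟨i, j⟩ - hne hswap
    obtain rfl : j = i := congrArg Prod.fst hswap
    exact hne (ZMod.intCast_eq_zero_iff_even.2 (((heven j).mul_right _).mul_left _))

variable [DecidableEq ι]

/-- Proper equivalence of the quadratic forms with Gram matrices `M` and `N`: the second arises
from the first by a linear substitution of determinant one. -/
def IsCongruent (M N : Matrix ι ι R) : Prop :=
  ∃ U : Matrix ι ι R, U.det = 1 ∧ N = Uᵀ * M * U

namespace IsCongruent

variable {M N P : Matrix ι ι R}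

theorem refl (M : Matrix ι ι R) : IsCongruent M M :=
  ⟨1, by simp⟩

theorem trans (hMN : IsCongruent M N) (hNP : IsCongruent N P) : IsCongruent M P := by
  obtain ⟨U, hU, rfl⟩ := hMN
  obtain ⟨V, hV, rfl⟩ := hNP
  exact ⟨U * V, by simp [hU, hV], by simp only [transpose_mul, Matrix.mul_assoc]⟩

theorem det_eq (h : IsCongruent M N) : N.det = M.det := by
  obtain ⟨U, hU, rfl⟩ := h
  simp [hU]

theorem represents {r : R} (h : IsCongruent M N) (hM : Represents M r) : Represents N r := by
  obtain ⟨U, hU, rfl⟩ := h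
  obtain ⟨v, rfl⟩ := hM
  refine ⟨U⁻¹ *ᵥ v, ?_⟩
  rw [dotProduct_transpose_mul_mul_mulVec, mulVec_mulVec, mul_nonsing_inv U (by simp [hU]),
    one_mulVec]

theorem isAnisotropicModRadical {q : R} (h : IsCongruent M N)
    (hM : IsAnisotropicModRadical M q) : IsAnisotropicModRadical N q := by
  obtain ⟨U, -, rfl⟩ := h
  intro v hv w
  rw [dotProduct_transpose_mul_mul_mulVec] at hv ⊢
  exact hM _ hv _

theorem posDef [PartialOrder R] [StarRing R] [TrivialStar R] (h : IsCongruent M N)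
    (hM : M.PosDef) : N.PosDef := by
  obtain ⟨U, hU, rfl⟩ := h
  have isUnit_U : IsUnit U := (isUnit_iff_isUnit_det U).2 (by simp [hU])
  rw [← conjTranspose_eq_transpose_of_trivial, ← star_eq_conjTranspose]
  exact isUnit_U.posDef_star_left_conjugate_iff.2 hM

end IsCongruent

end Congruence

section PivotMinor

variable {R : Type*} [CommRing R]

/-- The minor of `M` on rows `0, i` and columns `0, j`, which is `M 0 0` times the `(i, j)` entry
of the Schur complement of `M 0 0`. -/
def pivotMinor {n : ℕ} (M : Matrix (Fin (n + 1)) (Fin (n + 1)) R) (i j : Fin (n + 1)) : R :=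
  M 0 0 * M i j - M 0 j * M i 0

theorem pivotMinor_mul_pivotMinor (M : Matrix (Fin 3) (Fin 3) R) :
    pivotMinor M 1 1 * pivotMinor M 2 2 =
      M 0 0 * M.det + pivotMinor M 1 2 * pivotMinor M 2 1 := by
  rw [det_fin_three]
  simp only [pivotMinor]
  ring

theorem pivotMinor_comm {n : ℕ} {M : Matrix (Fin (n + 1)) (Fin (n + 1)) R} (hM : M.IsSymm)
    (i j : Fin (n + 1)) : pivotMinor M i j = pivotMinor M j i := by
  rw [pivotMinor, pivotMinor, hM.apply i j, hM.apply 0 i, hM.apply 0 j, mul_comm (M 0 j)]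

end PivotMinor

section HermiteReduction

variable {M N : Matrix (Fin 3) (Fin 3) ℤ}

/-- Reduction in the sense of Hermite of a positive definite ternary form: `M 0 0` and the leading
`2 × 2` minor do not decrease under swaps of neighbouring basis vectors, and the off-diagonal
entries are reduced modulo the corresponding diagonal entries, both in the first row of `M` and in
the Schur complement of `M 0 0`. -/
structure IsHermiteReduced (M : Matrix (Fin 3) (Fin 3) ℤ) : Prop where
  head_le : M 0 0 ≤ M 1 1
  pivotMinor_le : pivotMinor M 1 1 ≤ pivotMinor M 2 2
  abs_head_one_le : 2 * |M 0 1| ≤ M 0 0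
  abs_head_two_le : 2 * |M 0 2| ≤ M 0 0
  abs_pivotMinor_le : 2 * |pivotMinor M 1 2| ≤ pivotMinor M 1 1

theorem pivotMinor_pos (hM : M.PosDef) : 0 < pivotMinor M 1 1 := by
  have head_pos : 0 < M 0 0 := hM.diag_pos
  have ne_zero : ![-M 0 1, M 0 0, 0] ≠ 0 := fun h ↦ head_pos.ne' (congrFun h 1)
  have value_pos := hM.dotProduct_mulVec_pos ne_zero
  have value_eq : star ![-M 0 1, M 0 0, 0] ⬝ᵥ M *ᵥ ![-M 0 1, M 0 0, 0] =
      M 0 0 * pivotMinor M 1 1 := by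
    rw [star_trivial, pivotMinor, (isSymm_of_posDef hM).apply 0 1]
    simp only [dotProduct, mulVec, Fin.sum_univ_three, cons_val]
    rw [(isSymm_of_posDef hM).apply 0 1]
    ring
  rw [value_eq] at value_pos
  exact (mul_pos_iff_of_pos_left head_pos).1 value_pos

theorem exists_two_mul_abs_add_mul_le (u : ℤ) {m : ℤ} (hm : 0 < m) :
    ∃ k : ℤ, 2 * |u + k * m| ≤ m := by
  lift m to ℕ using hm.le
  refine ⟨-u.bdiv m, ?_⟩
  have lower := Int.le_bmod (x := u) (m := m) (by omega)
  have upper := Int.bmod_lt (x := u) (m := m) (by omega)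
  rw [neg_mul, ← sub_eq_add_neg, ← Int.bmod_eq_self_sub_bdiv_mul, ← abs_two, ← abs_mul, abs_le]
  omega

theorem IsCongruent.exists_minimal (hM : M.PosDef) :
    ∃ N, IsCongruent M N ∧ ∀ P, IsCongruent M P →
      N 0 0 < P 0 0 ∨ N 0 0 = P 0 0 ∧ pivotMinor N 1 1 ≤ pivotMinor P 1 1 := by
  let size (P : Matrix (Fin 3) (Fin 3) ℤ) : ℕ ×ₗ ℕ :=
    toLex ((P 0 0).toNat, (pivotMinor P 1 1).toNat)
  have nonempty : {P | IsCongruent M P}.Nonempty := ⟨M, .refl M⟩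
  have hN : IsCongruent M _ := Function.argminOn_mem size _ nonempty
  refine ⟨_, hN, fun P hP ↦ ?_⟩
  have size_le := Function.argminOn_le size {P | IsCongruent M P} hP
  have := (hN.posDef hM).diag_pos (i := 0)
  have := (hP.posDef hM).diag_pos (i := 0)
  have := pivotMinor_pos (hN.posDef hM)
  have := pivotMinor_pos (hP.posDef hM)
  rw [Prod.Lex.toLex_le_toLex] at size_le
  omega

theorem IsCongruent.exists_sizeReduced (hM : M.PosDef) :
    ∃ N, IsCongruent M N ∧ N 0 0 = M 0 0 ∧ pivotMinor N 1 1 = pivotMinor M 1 1 ∧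
      2 * |N 0 1| ≤ N 0 0 ∧ 2 * |N 0 2| ≤ N 0 0 ∧
      2 * |pivotMinor N 1 2| ≤ pivotMinor N 1 1 := by
  have hsymm := isSymm_of_posDef hM
  obtain ⟨k, hk⟩ := exists_two_mul_abs_add_mul_le (pivotMinor M 1 2) (pivotMinor_pos hM)
  obtain ⟨l, hl⟩ := exists_two_mul_abs_add_mul_le (M 0 1) (hM.diag_pos (i := 0))
  obtain ⟨m, hm⟩ := exists_two_mul_abs_add_mul_le (M 0 2 + k * M 0 1) (hM.diag_pos (i := 0))
  let U : Matrix (Fin 3) (Fin 3) ℤ := !![1, l, m; 0, 1, k; 0, 0, 1]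
  let N : Matrix (Fin 3) (Fin 3) ℤ := Uᵀ * M * U
  have head : N 0 0 = M 0 0 := by
    simp only [N, U, mul_apply, transpose_apply, Fin.sum_univ_three, of_apply, cons_val]
    ring
  have head_one : N 0 1 = M 0 1 + l * M 0 0 := by
    simp only [N, U, mul_apply, transpose_apply, Fin.sum_univ_three, of_apply, cons_val]
    ring
  have head_two : N 0 2 = M 0 2 + k * M 0 1 + m * M 0 0 := by
    simp only [N, U, mul_apply, transpose_apply, Fin.sum_univ_three, of_apply, cons_val]
    ring
  have pivot_one : pivotMinor N 1 1 = pivotMinor M 1 1 := by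
    simp only [N, U, pivotMinor, mul_apply, transpose_apply, Fin.sum_univ_three, of_apply, cons_val]
    rw [hsymm.apply 0 1]
    ring
  have pivot_two : pivotMinor N 1 2 = pivotMinor M 1 2 + k * pivotMinor M 1 1 := by
    simp only [N, U, pivotMinor, mul_apply, transpose_apply, Fin.sum_univ_three, of_apply, cons_val]
    rw [hsymm.apply 0 1]
    ring
  exact ⟨N, ⟨U, by simp [U, det_fin_three], rfl⟩, head, pivot_one, by rwa [head_one, head],
    by rwa [head_two, head], by rwa [pivot_two, pivot_one]⟩

theorem IsCongruent.exists_head_eq_apply_one_one (M : Matrix (Fin 3) (Fin 3) ℤ) :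
    ∃ N, IsCongruent M N ∧ N 0 0 = M 1 1 := by
  let U : Matrix (Fin 3) (Fin 3) ℤ := !![0, -1, 0; 1, 0, 0; 0, 0, 1]
  exact ⟨_, ⟨U, by simp [U, det_fin_three], rfl⟩, by simp [U, Matrix.mul_apply, Fin.sum_univ_three]⟩

theorem IsCongruent.exists_pivotMinor_one_eq_two (M : Matrix (Fin 3) (Fin 3) ℤ) :
    ∃ N, IsCongruent M N ∧ N 0 0 = M 0 0 ∧ pivotMinor N 1 1 = pivotMinor M 2 2 := by
  let U : Matrix (Fin 3) (Fin 3) ℤ := !![1, 0, 0; 0, 0, -1; 0, 1, 0]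
  exact ⟨_, ⟨U, by simp [U, det_fin_three], rfl⟩, by simp [U, Matrix.mul_apply, Fin.sum_univ_three],
    by simp [U, pivotMinor, Matrix.mul_apply, Fin.sum_univ_three]⟩

theorem IsCongruent.exists_isHermiteReduced (hM : M.PosDef) :
    ∃ N, IsCongruent M N ∧ IsHermiteReduced N := by
  obtain ⟨P, hMP, minimal⟩ := IsCongruent.exists_minimal hM
  obtain ⟨N, hPN, head_eq, pivot_eq, h01, h02, h12⟩ :=
    IsCongruent.exists_sizeReduced (hMP.posDef hM)
  have hMN := hMP.trans hPN
  refine ⟨N, hMN, ?_, ?_, h01, h02, h12⟩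
  · obtain ⟨S, hNS, swap_head⟩ := IsCongruent.exists_head_eq_apply_one_one N
    have := minimal S (hMN.trans hNS)
    omega
  · obtain ⟨S, hNS, swap_head, swap_pivot⟩ := IsCongruent.exists_pivotMinor_one_eq_two N
    have := minimal S (hMN.trans hNS)
    omega

namespace IsHermiteReduced

theorem three_mul_head_sq_le (hN : IsHermiteReduced N) (hsymm : N.IsSymm) :
    3 * N 0 0 ^ 2 ≤ 4 * pivotMinor N 1 1 := by
  have head_nonneg : 0 ≤ N 0 0 := by linarith [hN.abs_head_one_le, abs_nonneg (N 0 1)]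
  have sq_le : (2 * N 0 1) ^ 2 ≤ N 0 0 ^ 2 := by
    rw [sq_le_sq, abs_mul, abs_two, abs_of_nonneg head_nonneg]
    exact hN.abs_head_one_le
  have head_sq_le : N 0 0 * N 0 0 ≤ N 0 0 * N 1 1 :=
    mul_le_mul_of_nonneg_left hN.head_le head_nonneg
  rw [pivotMinor, hsymm.apply 0 1]
  linarith

theorem three_mul_pivotMinor_sq_le (hN : IsHermiteReduced N) (hsymm : N.IsSymm) :
    3 * pivotMinor N 1 1 ^ 2 ≤ 4 * (N 0 0 * N.det) := by
  have pivot_nonneg : 0 ≤ pivotMinor N 1 1 := by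
    linarith [hN.abs_pivotMinor_le, abs_nonneg (pivotMinor N 1 2)]
  have sq_le : (2 * pivotMinor N 1 2) ^ 2 ≤ pivotMinor N 1 1 ^ 2 := by
    rw [sq_le_sq, abs_mul, abs_two, abs_of_nonneg pivot_nonneg]
    exact hN.abs_pivotMinor_le
  have pivot_sq_le := mul_le_mul_of_nonneg_left hN.pivotMinor_le pivot_nonneg
  rw [pivotMinor_mul_pivotMinor, pivotMinor_comm hsymm 2 1] at pivot_sq_le
  linarith

theorem head_cube_le (hN : IsHermiteReduced N) (hpos : N.PosDef) :
    27 * N 0 0 ^ 3 ≤ 64 * N.det := by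
  have hsymm := isSymm_of_posDef hpos
  have head_pos : 0 < N 0 0 := hpos.diag_pos
  have head_pow_four_le : (3 * N 0 0 ^ 2) ^ 2 ≤ (4 * pivotMinor N 1 1) ^ 2 :=
    pow_le_pow_left₀ (by positivity) (hN.three_mul_head_sq_le hsymm) 2
  have pivot_sq_le := hN.three_mul_pivotMinor_sq_le hsymm
  refine le_of_mul_le_mul_left (?_ : N 0 0 * _ ≤ N 0 0 * _) head_pos
  linarith

end IsHermiteReduced

end HermiteReduction

section SmallDeterminant

variable {M N : Matrix (Fin 3) (Fin 3) ℤ}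

namespace IsHermiteReduced

theorem head_eq_one_or_two (hN : IsHermiteReduced N) (hpos : N.PosDef) (hdet : N.det ≤ 6) :
    N 0 0 = 1 ∨ N 0 0 = 2 := by
  have head_pos : 0 < N 0 0 := hpos.diag_pos
  have head_le_two : N 0 0 ≤ 2 := by
    by_contra! three_le
    have : (3 : ℤ) ^ 3 ≤ N 0 0 ^ 3 := pow_le_pow_left₀ (by norm_num) three_le 3
    linarith [hN.head_cube_le hpos]
  omega

theorem eq_diagonal_of_head_eq_one (hN : IsHermiteReduced N) (hpos : N.PosDef)
    (hdet : N.det ≤ 6) (haniso : IsAnisotropicModRadical N 3) (hhead : N 0 0 = 1) :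
    N = diagonal ![1, 1, N.det] := by
  have hsymm := isSymm_of_posDef hpos
  have h01 : N 0 1 = 0 := Int.abs_lt_one_iff.1 (by linarith [hN.abs_head_one_le])
  have h02 : N 0 2 = 0 := Int.abs_lt_one_iff.1 (by linarith [hN.abs_head_two_le])
  have pivot_eq (i j : Fin 3) (hj : N 0 j = 0) : pivotMinor N i j = N i j := by
    rw [pivotMinor, hhead, hj, one_mul, zero_mul, sub_zero]
  have h11_pos : 0 < N 1 1 := hpos.diag_pos
  have h11_ne_two : N 1 1 ≠ 2 := by
    intro h11
    have isotropic : ![1, 1, 0] ⬝ᵥ N *ᵥ ![1, 1, 0] = 3 := by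
      simp [dotProduct, mulVec, Fin.sum_univ_three, hsymm.apply 0 1, hhead, h01, h11]
    have not_radical : ![1, 0, 0] ⬝ᵥ N *ᵥ ![1, 1, 0] = 1 := by
      simp [dotProduct, mulVec, Fin.sum_univ_three, hhead, h01]
    have three_dvd_one := haniso ![1, 1, 0] isotropic.symm.dvd ![1, 0, 0]
    rw [not_radical] at three_dvd_one
    omega
  have h11 : N 1 1 = 1 := by
    have := hN.three_mul_pivotMinor_sq_le hsymm
    rw [pivot_eq 1 1 h01, hhead] at this
    have : N 1 1 < 3 := by nlinarith
    omega
  have h12 : N 1 2 = 0 := by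
    have := hN.abs_pivotMinor_le
    rw [pivot_eq 1 1 h01, pivot_eq 1 2 h02] at this
    exact Int.abs_lt_one_iff.1 (by linarith)
  have hdet_eq : N.det = N 2 2 := by
    simp [det_fin_three, hsymm.apply 0 1, hsymm.apply 0 2, hsymm.apply 1 2, hhead, h01, h02, h11,
      h12]
  ext i j
  fin_cases i <;> fin_cases j <;>
    simp [hsymm.apply 0 1, hsymm.apply 0 2, hsymm.apply 1 2, hhead, h01, h02, h11, h12, hdet_eq]

theorem pivotMinor_two_le_four (hN : IsHermiteReduced N) (hsymm : N.IsSymm)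
    (hdet : N.det ≤ 6) (hhead : N 0 0 = 2) : pivotMinor N 2 2 ≤ 4 := by
  have lower := hN.three_mul_head_sq_le hsymm
  have upper := hN.three_mul_pivotMinor_sq_le hsymm
  have identity := pivotMinor_mul_pivotMinor N
  rw [hhead] at lower upper identity
  rw [pivotMinor_comm hsymm 2 1] at identity
  have size_reduced := abs_le.1 (show |2 * pivotMinor N 1 2| ≤ pivotMinor N 1 1 by
    rw [abs_mul, abs_two]
    exact hN.abs_pivotMinor_le)
  obtain pivot_eq | pivot_eq : pivotMinor N 1 1 = 3 ∨ pivotMinor N 1 1 = 4 := by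
    have : pivotMinor N 1 1 < 5 := by nlinarith
    omega
  all_goals
    rw [pivot_eq] at identity size_reduced
    nlinarith

theorem diag_eq_two_of_head_eq_two (hN : IsHermiteReduced N) (hsymm : N.IsSymm)
    (hdet : N.det ≤ 6) (hhead : N 0 0 = 2) (i : Fin 3) : N i i = 2 := by
  have pivot_one_ge := hN.three_mul_head_sq_le hsymm
  have pivot_two_le := hN.pivotMinor_two_le_four hsymm hdet hhead
  have pivot_le := hN.pivotMinor_le
  have h01_sq : N 0 1 ^ 2 ≤ 1 := by
    rw [sq_le_one_iff_abs_le_one]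
    linarith [hN.abs_head_one_le]
  have h02_sq : N 0 2 ^ 2 ≤ 1 := by
    rw [sq_le_one_iff_abs_le_one]
    linarith [hN.abs_head_two_le]
  have := sq_nonneg (N 0 1)
  have := sq_nonneg (N 0 2)
  simp only [pivotMinor, hhead, hsymm.apply 0 1, hsymm.apply 0 2, ← sq]
    at pivot_one_ge pivot_two_le pivot_le
  fin_cases i
  · exact hhead
  · change N 1 1 = 2
    omega
  · change N 2 2 = 2
    omega

end IsHermiteReduced

theorem isCongruent_diagonal_of_det_le_six (hM : M.PosDef) (hdet : M.det ≤ 6)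
    (haniso : IsAnisotropicModRadical M 3) {m : ℤ} (hm : Odd m) (hMm : Represents M m) :
    IsCongruent M (diagonal ![1, 1, M.det]) := by
  obtain ⟨N, hMN, hN⟩ := IsCongruent.exists_isHermiteReduced hM
  have hpos := hMN.posDef hM
  rw [← hMN.det_eq] at hdet ⊢
  obtain head_eq_one | head_eq_two := hN.head_eq_one_or_two hpos hdet
  · rwa [← hN.eq_diagonal_of_head_eq_one hpos hdet (hMN.isAnisotropicModRadical haniso) head_eq_one]
  · obtain ⟨v, rfl⟩ := hMN.represents hMm
    have hsymm := isSymm_of_posDef hpos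
    have even_diag (i : Fin 3) : Even (N i i) := by
      rw [hN.diag_eq_two_of_head_eq_two hsymm hdet head_eq_two i]
      exact even_two
    exact absurd hm (Int.not_odd_iff_even.2 (even_dotProduct_mulVec hsymm even_diag v))

end SmallDeterminant

section BorderedForm

/-- The Gram matrix of `p y² + 2 s x y + A x² + 2 x z + n z²`. It represents `n` and `p`, and the
border is chosen so that the determinant is `b n - p` with `b = A p - s²`. -/
def borderedForm {R : Type*} [CommRing R] (A s p n : R) : Matrix (Fin 3) (Fin 3) R :=
  !![A, s, 1; s, p, 0; 1, 0, n]

theorem borderedForm_det {R : Type*} [CommRing R] (A s p n : R) :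
    (borderedForm A s p n).det = (A * p - s ^ 2) * n - p := by
  simp only [borderedForm, det_fin_three, of_apply, cons_val]
  ring

theorem dotProduct_borderedForm_mulVec {R : Type*} [CommRing R] (A s p n : R) (v w : Fin 3 → R) :
    w ⬝ᵥ borderedForm A s p n *ᵥ v =
      w 0 * (A * v 0 + s * v 1 + v 2) + w 1 * (s * v 0 + p * v 1) + w 2 * (v 0 + n * v 2) := by
  simp [borderedForm, dotProduct, mulVec, Fin.sum_univ_three]

variable {A s p n : ℤ}

theorem borderedForm_posDef (hp : 0 < p) (hb : 0 < A * p - s ^ 2)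
    (hD : 0 < (A * p - s ^ 2) * n - p) : (borderedForm A s p n).PosDef := by
  have isSymm : (borderedForm A s p n).IsSymm := by
    ext i j
    fin_cases i <;> fin_cases j <;> rfl
  refine .of_dotProduct_mulVec_pos (isHermitian_iff_isSymm.2 isSymm) fun v hv ↦ ?_
  rw [star_trivial]
  set b := A * p - s ^ 2 with hb_def
  have complete_squares : p * b * (v ⬝ᵥ borderedForm A s p n *ᵥ v) =
      b * (s * v 0 + p * v 1) ^ 2 + (b * v 0 + p * v 2) ^ 2 + p * (b * n - p) * v 2 ^ 2 := by
    rw [dotProduct_borderedForm_mulVec, hb_def]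
    ring
  refine pos_of_mul_pos_right (a := p * b) ?_ (by positivity)
  rw [complete_squares]
  refine lt_of_le_of_ne (by positivity) fun hzero ↦ hv ?_
  have nonneg0 : 0 ≤ (b * v 0 + p * v 2) ^ 2 := by positivity
  have nonneg1 : 0 ≤ b * (s * v 0 + p * v 1) ^ 2 := by positivity
  have nonneg2 : 0 ≤ p * (b * n - p) * v 2 ^ 2 := by positivity
  have zero2 : v 2 = 0 := by
    have : p * (b * n - p) * v 2 ^ 2 = 0 := by linarith
    simpa [hp.ne', hD.ne'] using this
  have zero0 : v 0 = 0 := by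
    have : (b * v 0 + p * v 2) ^ 2 = 0 := by linarith
    simpa [zero2, hb.ne'] using this
  have zero1 : v 1 = 0 := by
    have : b * (s * v 0 + p * v 1) ^ 2 = 0 := by linarith
    simpa [zero0, hb.ne', hp.ne'] using this
  ext i
  fin_cases i <;> assumption

theorem dvd_and_dvd_of_dvd_sq_add_sq {q : ℕ} [Fact q.Prime] (hq : q % 4 = 3) {x y : ℤ}
    (h : (q : ℤ) ∣ x ^ 2 + y ^ 2) : (q : ℤ) ∣ x ∧ (q : ℤ) ∣ y := by
  simp only [← ZMod.intCast_zmod_eq_zero_iff_dvd] at h ⊢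
  push_cast at h
  constructor <;> by_contra hne
  · exact ZMod.mod_four_ne_three_of_sq_eq_neg_sq hne (eq_neg_of_add_eq_zero_left h) hq
  · exact ZMod.mod_four_ne_three_of_sq_eq_neg_sq' hne (eq_neg_of_add_eq_zero_left h) hq

theorem borderedForm_isAnisotropicModRadical {q : ℕ} [Fact q.Prime] (hq : q % 4 = 3)
    (hb : A * p - s ^ 2 ≡ 1 [ZMOD q]) (hD : (q : ℤ) ∣ (A * p - s ^ 2) * n - p)
    (hp : ¬ (q : ℤ) ∣ p) : IsAnisotropicModRadical (borderedForm A s p n) (q : ℤ) := by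
  intro v hv w
  rw [dotProduct_borderedForm_mulVec] at hv ⊢
  have sum_sq : (q : ℤ) ∣ (s * v 0 + p * v 1) ^ 2 + (v 0 + n * v 2) ^ 2 := by
    have sum_sq_eq : (s * v 0 + p * v 1) ^ 2 + (v 0 + n * v 2) ^ 2 =
        p * (v 0 * (A * v 0 + s * v 1 + v 2) + v 1 * (s * v 0 + p * v 1) +
            v 2 * (v 0 + n * v 2)) +
          (1 - (A * p - s ^ 2)) * (v 0 + n * v 2) ^ 2 +
          ((A * p - s ^ 2) * n - p) * (v 2 * (2 * v 0 + n * v 2)) := by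
      ring
    rw [sum_sq_eq]
    exact ((hv.mul_left p).add (hb.dvd.mul_right _)).add (hD.mul_right _)
  obtain ⟨hrow1, hrow2⟩ := dvd_and_dvd_of_dvd_sq_add_sq hq sum_sq
  have hrow0 : (q : ℤ) ∣ A * v 0 + s * v 1 + v 2 := by
    refine ((Nat.prime_iff_prime_int.1 Fact.out).dvd_or_dvd ?_).resolve_left hp
    have row0_eq : p * (A * v 0 + s * v 1 + v 2) =
        s * (s * v 0 + p * v 1) + (A * p - s ^ 2) * (v 0 + n * v 2) -
          ((A * p - s ^ 2) * n - p) * v 2 := by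
      ring
    rw [row0_eq]
    exact ((hrow1.mul_left _).add (hrow2.mul_left _)).sub (hD.mul_right _)
  exact ((hrow0.mul_left _).add (hrow1.mul_left _)).add (hrow2.mul_left _)

theorem exists_sq_add_sq_add_mul_sq {D b n s : ℤ} (hD : 0 < D) (hD6 : D ≤ 6) (hD3 : 3 ∣ D)
    (hb : 0 < b) (hb3 : b ≡ 1 [ZMOD 3]) (hn3 : ¬ 3 ∣ n) (hpos : 0 < b * n - D)
    (hodd : Odd (b * n - D)) (hs : b * n - D ∣ s ^ 2 + b) :
    ∃ x y z : ℤ, x ^ 2 + y ^ 2 + D * z ^ 2 = n := by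
  obtain ⟨p, hp⟩ : ∃ p, p = b * n - D := ⟨_, rfl⟩
  rw [← hp] at hpos hodd hs
  obtain ⟨A, hA⟩ := hs
  have hb_eq : A * p - s ^ 2 = b := by linear_combination -hA
  have hD_eq : (A * p - s ^ 2) * n - p = D := by rw [hb_eq, hp]; ring
  have hp3 : ¬ 3 ∣ p := by
    have : b * n ≡ 1 * n [ZMOD 3] := hb3.mul_right n
    rw [Int.modEq_iff_dvd] at this
    omega
  have isCongruent : IsCongruent (borderedForm A s p n) (diagonal ![1, 1, D]) := by
    rw [← hD_eq, ← borderedForm_det]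
    refine isCongruent_diagonal_of_det_le_six (borderedForm_posDef hpos (by omega) (by omega))
      (by rw [borderedForm_det]; omega) ?_ hodd ⟨![0, 1, 0], ?_⟩
    · exact borderedForm_isAnisotropicModRadical (q := 3) rfl (by rwa [hb_eq])
        (by rwa [hD_eq]) hp3
    · rw [dotProduct_borderedForm_mulVec]
      simp
  obtain ⟨v, hv⟩ := isCongruent.represents (r := n) ⟨![0, 0, 1], by
    rw [dotProduct_borderedForm_mulVec]
    simp⟩
  refine ⟨v 0, v 1, v 2, ?_⟩
  rw [← hv]
  simp only [dotProduct, mulVec_diagonal, Fin.sum_univ_three, cons_val]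
  ring

end BorderedForm

section TernarySums

theorem exists_prime_eq_mul_sub {n m r D : ℤ} (hn : 0 < n) (hm : 0 < m)
    (hcop : IsCoprime (r * n - D) (m * n)) :
    ∃ (p : ℕ) (b : ℤ), p.Prime ∧ 0 < b ∧ b ≡ r [ZMOD m] ∧ (p : ℤ) = b * n - D := by
  lift n to ℕ using hn.le
  lift m to ℕ using hm.le
  obtain ⟨p, hpD, hp, hmod⟩ := Nat.forall_exists_prime_gt_and_zmodEq (-D).toNat
    (q := m * n) (mul_ne_zero (by omega) (by omega)) (by exact_mod_cast hcop)
  obtain ⟨k, hk⟩ := hmod.symm.dvd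
  push_cast at hk
  have hp_eq : (p : ℤ) = (r + m * k) * n - D := by linear_combination hk
  refine ⟨p, r + m * k, hp, pos_of_mul_pos_left (b := (n : ℤ)) ?_ hn.le, ?_, hp_eq⟩
  · have : -D < p := by omega
    linarith
  · simp [Int.ModEq]

open NumberTheorySymbols

theorem isSquare_neg_natCast_of_jacobiSym {p c : ℕ} [Fact p.Prime] (hp : Odd p) (hc : Odd c)
    (hmod : p % 4 = 1 ∨ c % 4 = 3) (hJ : J(p | c) = 1) : IsSquare ((-c : ℤ) : ZMod p) := by
  apply ZMod.isSquare_of_jacobiSym_eq_one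
  rw [jacobiSym.neg _ hp]
  obtain hp4 | hp4 : p % 4 = 1 ∨ p % 4 = 3 := Nat.odd_mod_four_iff.1 (Nat.odd_iff.1 hp)
  · rw [ZMod.χ₄_nat_one_mod_four hp4, jacobiSym.quadratic_reciprocity_one_mod_four' hc hp4, hJ]
    rfl
  · rw [ZMod.χ₄_nat_three_mod_four hp4,
      jacobiSym.quadratic_reciprocity_three_mod_four (by omega) hp4, hJ]
    rfl

theorem jacobiSym_neg_three {c : ℕ} (hc : c % 6 = 1) : J(-3 | c) = 1 := by
  rw [jacobiSym.mod_right _ (Nat.odd_iff.2 (by omega))]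
  obtain h | h : c % 12 = 1 ∨ c % 12 = 7 := by omega
  all_goals norm_num [h]

theorem jacobiSym_neg_six {c : ℕ} (hc : c % 24 = 7) : J(-6 | c) = 1 := by
  rw [jacobiSym.mod_right _ (Nat.odd_iff.2 (by omega))]
  norm_num [hc]

theorem exists_dvd_sq_add_of_isSquare {p : ℕ} {b : ℤ} (h : IsSquare ((-b : ℤ) : ZMod p)) :
    ∃ s : ℤ, (p : ℤ) ∣ s ^ 2 + b := by
  obtain ⟨t, ht⟩ := h
  obtain ⟨s, rfl⟩ := ZMod.intCast_surjective t
  refine ⟨s, (ZMod.intCast_zmod_eq_zero_iff_dvd _ p).1 ?_⟩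
  push_cast at ht ⊢
  linear_combination -ht

theorem isCoprime_mul_sub_self {r n D : ℤ} (h : IsCoprime D n) : IsCoprime (r * n - D) n := by
  have := h.neg_left.add_mul_right_left r
  rwa [neg_add_eq_sub] at this

theorem isCoprime_twentyFour {a : ℤ} (h2 : ¬ 2 ∣ a) (h3 : ¬ 3 ∣ a) : IsCoprime a 24 := by
  have h2 : IsCoprime a 2 := (Int.prime_two.coprime_iff_not_dvd.2 h2).symm
  have h3 : IsCoprime a 3 := (Int.prime_three.coprime_iff_not_dvd.2 h3).symm
  exact (h2.pow_right (n := 3)).mul_right h3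

-- With `b = 4 c`, `c ≡ 1 (mod 6)`, one has `p ≡ 1 (mod 4)`, so that by reciprocity
-- `(-b | p) = (p | c) = (-3 | c) = 1`.
theorem exists_sq_add_sq_add_three_mul_sq {n : ℤ} (hn : 0 < n) (hn3 : ¬ 3 ∣ n) :
    ∃ x y z : ℤ, x ^ 2 + y ^ 2 + 3 * z ^ 2 = n := by
  have hcop : IsCoprime (4 * n - 3) (24 * n) :=
    (isCoprime_twentyFour (by omega) (by omega)).mul_right
      (isCoprime_mul_sub_self (Int.prime_three.coprime_iff_not_dvd.2 hn3))
  obtain ⟨p, b, hp, hb, hb24, hpb⟩ := exists_prime_eq_mul_sub hn (by norm_num) hcop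
  obtain ⟨c, rfl⟩ : ∃ c : ℕ, b = 4 * c := ⟨b.toNat / 4, by unfold Int.ModEq at hb24; omega⟩
  have hc : c % 6 = 1 := by unfold Int.ModEq at hb24; omega
  have hp4 : p % 4 = 1 := by
    rw [mul_assoc] at hpb
    omega
  have := Fact.mk hp
  have hJ : J(p | c) = 1 := by
    rw [jacobiSym.mod_left' (a₂ := -3), jacobiSym_neg_three hc]
    exact (Int.modEq_iff_dvd.2 ⟨-(4 * n), by rw [hpb]; ring⟩ : (p : ℤ) ≡ -3 [ZMOD c])
  have isSquare_neg_c : IsSquare ((-c : ℤ) : ZMod p) :=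
    isSquare_neg_natCast_of_jacobiSym (Nat.odd_iff.2 (by omega)) (Nat.odd_iff.2 (by omega))
      (.inl hp4) hJ
  obtain ⟨s, hs⟩ := exists_dvd_sq_add_of_isSquare isSquare_neg_c
  have hs4 : (p : ℤ) ∣ (2 * s) ^ 2 + 4 * c := by
    rw [mul_pow, show (2 : ℤ) ^ 2 = 4 by norm_num, ← mul_add]
    exact hs.mul_left 4
  refine exists_sq_add_sq_add_mul_sq (s := 2 * s) (by norm_num) (by norm_num) dvd_rfl hb
    (by unfold Int.ModEq; omega) hn3 ?_ ?_ ?_ <;> rw [← hpb]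
  · exact_mod_cast hp.pos
  · exact_mod_cast Nat.odd_iff.2 (by omega)
  · exact hs4

-- With `b ≡ 7 (mod 24)`, reciprocity gives `(-b | p) = (p | b) = (-6 | b) = 1`.
theorem exists_sq_add_sq_add_six_mul_sq_of_odd {n : ℤ} (hn : 0 < n) (hn3 : ¬ 3 ∣ n)
    (hodd : Odd n) : ∃ x y z : ℤ, x ^ 2 + y ^ 2 + 6 * z ^ 2 = n := by
  have hn2 : ¬ 2 ∣ n := fun h ↦ Int.not_even_iff_odd.2 hodd (even_iff_two_dvd.2 h)
  have cop6 : IsCoprime (6 : ℤ) n :=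
    (Int.prime_two.coprime_iff_not_dvd.2 hn2).mul_left (Int.prime_three.coprime_iff_not_dvd.2 hn3)
  have hcop : IsCoprime (7 * n - 6) (24 * n) :=
    (isCoprime_twentyFour (by omega) (by omega)).mul_right (isCoprime_mul_sub_self cop6)
  obtain ⟨p, b, hp, hb, hb24, hpb⟩ := exists_prime_eq_mul_sub hn (by norm_num) hcop
  lift b to ℕ using hb.le
  have hc : b % 24 = 7 := by unfold Int.ModEq at hb24; omega
  have hp_odd : Odd (b * n - 6) := by
    have : Odd (b : ℤ) := by exact_mod_cast Nat.odd_iff.2 (by omega)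
    exact (this.mul hodd).sub_even (by decide)
  have := Fact.mk hp
  have hJ : J(p | b) = 1 := by
    rw [jacobiSym.mod_left' (a₂ := -6), jacobiSym_neg_six hc]
    exact (Int.modEq_iff_dvd.2 ⟨-n, by rw [hpb]; ring⟩ : (p : ℤ) ≡ -6 [ZMOD b])
  have isSquare_neg_b : IsSquare ((-b : ℤ) : ZMod p) :=
    isSquare_neg_natCast_of_jacobiSym (by rw [← hpb] at hp_odd; exact_mod_cast hp_odd)
      (Nat.odd_iff.2 (by omega)) (.inr (by omega)) hJ
  obtain ⟨s, hs⟩ := exists_dvd_sq_add_of_isSquare isSquare_neg_b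
  refine exists_sq_add_sq_add_mul_sq (by norm_num) le_rfl (by norm_num) hb
    (by unfold Int.ModEq; omega) hn3 ?_ hp_odd (hpb ▸ hs)
  rw [← hpb]
  exact_mod_cast hp.pos

theorem exists_sq_add_sq_add_six_mul_sq {n : ℤ} (hn : 0 < n) (hn3 : ¬ 3 ∣ n) :
    ∃ x y z : ℤ, x ^ 2 + y ^ 2 + 6 * z ^ 2 = n := by
  obtain heven | hodd := n.even_or_odd
  · obtain ⟨m, rfl⟩ := even_iff_two_dvd.1 heven
    obtain ⟨x, y, z, h⟩ := exists_sq_add_sq_add_three_mul_sq (n := m) (by omega) (by omega)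
    exact ⟨x + y, x - y, z, by linear_combination 2 * h⟩
  · exact exists_sq_add_sq_add_six_mul_sq_of_odd hn hn3 hodd

end TernarySums

section Octagonal

theorem exists_sq_eq_three_mul_sub_one_sq {u : ℤ} (hu : ¬ 3 ∣ u) :
    ∃ y : ℤ, u ^ 2 = (3 * y - 1) ^ 2 := by
  obtain hu | hu : u % 3 = 1 ∨ u % 3 = 2 := by omega
  · exact ⟨(1 - u) / 3, by rw [sq_eq_sq_iff_eq_or_eq_neg]; omega⟩
  · exact ⟨(1 + u) / 3, by rw [sq_eq_sq_iff_eq_or_eq_neg]; omega⟩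

theorem not_three_dvd_of_sq_add_sq_modEq_two {u v : ℤ} (h : u ^ 2 + v ^ 2 ≡ 2 [ZMOD 3]) :
    ¬ 3 ∣ u ∧ ¬ 3 ∣ v := by
  have residues : ∀ a b : ZMod 3, a ^ 2 + b ^ 2 = 2 → a ≠ 0 ∧ b ≠ 0 := by decide
  have := residues u v (by exact_mod_cast (ZMod.intCast_eq_intCast_iff _ _ 3).2 h)
  simpa only [ne_eq, ZMod.intCast_zmod_eq_zero_iff_dvd, Nat.cast_ofNat] using this

theorem exists_mul_sq_add_octagonal_of_sq_add_sq {α N u v x : ℤ}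
    (h : u ^ 2 + v ^ 2 + 3 * α * x ^ 2 = 3 * N + 2) :
    ∃ x y z : ℤ, α * x ^ 2 + (3 * y ^ 2 - 2 * y) + (3 * z ^ 2 - 2 * z) = N := by
  have sum_sq_modEq : u ^ 2 + v ^ 2 ≡ 2 [ZMOD 3] :=
    Int.modEq_iff_dvd.2 ⟨α * x ^ 2 - N, by linear_combination -h⟩
  obtain ⟨hu, hv⟩ := not_three_dvd_of_sq_add_sq_modEq_two sum_sq_modEq
  obtain ⟨y, hy⟩ := exists_sq_eq_three_mul_sub_one_sq hu
  obtain ⟨z, hz⟩ := exists_sq_eq_three_mul_sub_one_sq hv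
  refine ⟨x, y, z, mul_left_cancel₀ three_ne_zero ?_⟩
  linear_combination h - hy - hz

end Octagonal

theorem universal_alphax2_P8_P8 :
    ∀ α ∈ ({1, 2} : Set ℤ), ∀ N : ℤ, 0 ≤ N →
      ∃ x y z : ℤ,
        α * x ^ 2 + (3 * y ^ 2 - 2 * y) + (3 * z ^ 2 - 2 * z) = N := by
  rintro α (rfl | rfl) N hN
  · obtain ⟨u, v, x, h⟩ :=
      exists_sq_add_sq_add_three_mul_sq (n := 3 * N + 2) (by omega) (by omega)
    exact exists_mul_sq_add_octagonal_of_sq_add_sq (u := u) (v := v) (x := x)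
      (by linear_combination h)
  · obtain ⟨u, v, x, h⟩ :=
      exists_sq_add_sq_add_six_mul_sq (n := 3 * N + 2) (by omega) (by omega)
    exact exists_mul_sq_add_octagonal_of_sq_add_sq (u := u) (v := v) (x := x)
      (by linear_combination h)
end

section
/- For every integer α with 4 ≤ α ≤ 6 and every nonnegative integer N, the equation x² + y² + αz² + 3(3t² − 2t) = N has an integer solution in ℤ⁴; and for every integer β with 3 ≤ β ≤ 6 and every nonnegative integer N, the equation x² + y² + 3(3z² − 2z) + β(3t² − 2t) = N has an integer solution in ℤ⁴. That is, the quaternary mixed sums x²+y²+αz²+3P₈(t) (4 ≤ α ≤ 6) and x²+y²+3P₈(z)+βP₈(t) (3 ≤ β ≤ 6) are universal. -/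
/-!
As `3 * P₈(t) + 1 = (3 * t - 1) ^ 2`, and every integer prime to `3` is `3 * t - 1` up to sign, it
suffices to choose `z` (or the last variable `t`) such that `n = N + 1 - α * z ^ 2` (or
`n = N + 1 - β * P₈(t)`) is a positive sum of three squares one of which is prime to `3`. The
condition at `3` is free: a common factor `3` of the three terms can be removed and then put back by
an integral matrix which is `3` times an orthogonal one. When `β = 3`, one needs instead two terms
prime to `3` in a representation of `N + 2` as a sum of four squares.

A positive `n` with `n % 4 ≠ 0` and `n % 8 ≠ 7` is a sum of three squares: if `d * n - 1` divides
`m ^ 2 + d`, then `n` is a diagonal entry of a positive definite integral `3 × 3` matrix of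
determinant one, which by Hermite's bound has the form `Vᵀ * V`. Dirichlet's theorem provides `d`
with `d * n - 1` a prime or twice a prime, for which reciprocity shows that `-d` is a square
modulo `d * n - 1`.
-/

open Matrix NumberTheorySymbols

section Condensation

variable {R : Type*} [CommRing R] {n : ℕ}

/-- Chió's condensation of `A` along its top left entry: `A 0 0` times the Schur complement of
`A 0 0` in `A`, which is defined without division. -/
def condense (A : Matrix (Fin (n + 1)) (Fin (n + 1)) R) : Matrix (Fin n) (Fin n) R :=
  of fun i j ↦ A 0 0 * A i.succ j.succ - A i.succ 0 * A 0 j.succ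

theorem det_of_vecCons_vecCons_zero (r : Fin (n + 1) → R) (A : Matrix (Fin n) (Fin n) R) :
    (of (vecCons r fun i ↦ vecCons 0 (A i))).det = r 0 * A.det := by
  have submatrix_eq :
      (of (vecCons r fun i ↦ vecCons 0 (A i))).submatrix Fin.succ Fin.succ = A := rfl
  rw [det_succ_column_zero, Fin.sum_univ_succ]
  simp [submatrix_eq]

theorem mul_det_condense (A : Matrix (Fin (n + 1)) (Fin (n + 1)) R) :
    A 0 0 * (condense A).det = A 0 0 ^ n * A.det := by
  let scaled : Matrix (Fin (n + 1)) (Fin (n + 1)) R :=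
    of fun i j ↦ (Fin.cons 1 fun _ ↦ A 0 0 : Fin (n + 1) → R) i * A i j
  let cleared : Matrix (Fin (n + 1)) (Fin (n + 1)) R :=
    of (vecCons (A 0) fun i ↦ vecCons 0 (condense A i))
  have det_scaled : scaled.det = A 0 0 ^ n * A.det := by
    simp [scaled, det_mul_column, Fin.prod_univ_succ]
  have det_cleared : cleared.det = A 0 0 * (condense A).det := det_of_vecCons_vecCons_zero _ _
  rw [← det_scaled, ← det_cleared]
  refine det_eq_of_forall_row_eq_smul_add_const (Fin.cons 0 fun i ↦ -A i.succ 0) 0 rfl fun i j ↦ ?_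
  cases i using Fin.cases <;> cases j using Fin.cases <;>
    simp only [scaled, cleared, condense, of_apply, cons_val_zero, cons_val_succ, Fin.cons_zero,
      Fin.cons_succ] <;> ring

theorem condense_eq_of_isSymm {A : Matrix (Fin (n + 1)) (Fin (n + 1)) R} (hA : A.IsSymm) :
    condense A =
      A 0 0 • A.submatrix Fin.succ Fin.succ - vecMulVec (vecTail (A 0)) (vecTail (A 0)) := by
  ext i j
  simp [condense, vecMulVec_apply, vecTail, hA.apply 0 i.succ]

theorem isSymm_condense {A : Matrix (Fin (n + 1)) (Fin (n + 1)) R} (hA : A.IsSymm) :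
    (condense A).IsSymm := by
  ext i j
  simp [condense, hA.apply i.succ j.succ, hA.apply 0 i.succ, hA.apply 0 j.succ, mul_comm]

theorem mul_vecCons_dotProduct_mulVec {A : Matrix (Fin (n + 1)) (Fin (n + 1)) R} (hA : A.IsSymm)
    (x : R) (w : Fin n → R) :
    A 0 0 * (vecCons x w ⬝ᵥ A *ᵥ vecCons x w) =
      (A 0 0 * x + vecTail (A 0) ⬝ᵥ w) ^ 2 + w ⬝ᵥ condense A *ᵥ w := by
  have mulVec_eq : A *ᵥ vecCons x w = vecCons (A 0 0 * x + vecTail (A 0) ⬝ᵥ w)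
      (x • vecTail (A 0) + A.submatrix Fin.succ Fin.succ *ᵥ w) := by
    ext i
    cases i using Fin.cases <;>
      simp [mulVec, dotProduct, Fin.sum_univ_succ, vecTail, hA.apply 0 (Fin.succ _), mul_comm]
  rw [mulVec_eq, condense_eq_of_isSymm hA, cons_dotProduct_cons, sub_mulVec, smul_mulVec,
    vecMulVec_mulVec, dotProduct_add, dotProduct_sub, dotProduct_smul, dotProduct_smul]
  simp only [dotProduct_comm w, smul_eq_mul, op_smul_eq_smul, smul_dotProduct]
  ring

end Condensation

section HermiteReduction

variable {n : ℕ}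

theorem posDef_int_iff {ι : Type*} [Fintype ι] {A : Matrix ι ι ℤ} :
    A.PosDef ↔ A.IsSymm ∧ ∀ x ≠ 0, 0 < x ⬝ᵥ A *ᵥ x := by
  simp [posDef_iff_dotProduct_mulVec, IsHermitian, IsSymm, conjTranspose_eq_transpose_of_trivial]

theorem posDef_iff_posDef_condense {A : Matrix (Fin (n + 1)) (Fin (n + 1)) ℤ} :
    A.PosDef ↔ A.IsSymm ∧ 0 < A 0 0 ∧ (condense A).PosDef := by
  refine ⟨fun hA ↦ ?_, fun ⟨hsymm, hpos, hcond⟩ ↦ posDef_int_iff.2 ⟨hsymm, fun v hv ↦ ?_⟩⟩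
  · obtain ⟨hsymm, hA'⟩ := posDef_int_iff.1 hA
    refine ⟨hsymm, hA.diag_pos, posDef_int_iff.2 ⟨isSymm_condense hsymm, fun w hw ↦ ?_⟩⟩
    -- the projection of `(0, w)` along the first basis vector, scaled to be integral
    let v := vecCons (-(vecTail (A 0) ⬝ᵥ w)) (A 0 0 • w)
    have v_ne_zero : v ≠ 0 := fun h ↦
      hw <| (smul_eq_zero.1 (cons_eq_zero_iff.1 h).2).resolve_left hA.diag_pos.ne'
    have mul_value : A 0 0 * (v ⬝ᵥ A *ᵥ v) = A 0 0 ^ 2 * (w ⬝ᵥ condense A *ᵥ w) := by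
      rw [mul_vecCons_dotProduct_mulVec hsymm, mulVec_smul, smul_dotProduct, dotProduct_smul,
        dotProduct_smul, smul_eq_mul, smul_eq_mul, smul_eq_mul]
      ring
    exact pos_of_mul_pos_right (mul_value ▸ mul_pos hA.diag_pos (hA' v v_ne_zero)) (sq_nonneg _)
  · obtain ⟨x, w, rfl⟩ : ∃ x w, v = vecCons x w := ⟨_, _, (cons_head_tail v).symm⟩
    refine pos_of_mul_pos_right ?_ hpos.le
    rw [mul_vecCons_dotProduct_mulVec hsymm]
    rcases eq_or_ne w 0 with rfl | hw
    · have hx : x ≠ 0 := by rintro rfl; simp at hv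
      have := hpos.ne'
      simp only [dotProduct_zero, mulVec_zero, add_zero]
      positivity
    · exact add_pos_of_nonneg_of_pos (sq_nonneg _) ((posDef_int_iff.1 hcond).2 w hw)

theorem exists_four_mul_sq_le {a : ℤ} (ha : 0 < a) (b : ℤ) :
    ∃ x : ℤ, 4 * (a * x + b) ^ 2 ≤ a ^ 2 := by
  lift a to ℕ using ha.le
  have remainder : a * -b.bdiv a + b = b.bmod a := by linarith [Int.bdiv_add_bmod b a]
  have lower : -(a / 2 : ℤ) ≤ b.bmod a := Int.le_bmod (by omega)
  have upper : b.bmod a ≤ (a - 1) / 2 := Int.bmod_le (by omega)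
  refine ⟨-b.bdiv a, ?_⟩
  rw [remainder]
  have : (2 * b.bmod a) ^ 2 ≤ a ^ 2 := sq_le_sq' (by omega) (by omega)
  linarith

section Congruence

variable {ι : Type*} [Fintype ι]

theorem transpose_mul_mul_apply_self {κ R : Type*} [NonUnitalSemiring R] (A : Matrix ι ι R)
    (U : Matrix ι κ R) (i : κ) : (Uᵀ * A * U) i i = U.col i ⬝ᵥ A *ᵥ U.col i := by
  rw [Matrix.mul_assoc]
  rfl

variable [DecidableEq ι] {A U : Matrix ι ι ℤ}

theorem posDef_transpose_mul_mul (hU : IsUnit U) (hA : A.PosDef) : (Uᵀ * A * U).PosDef := by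
  simpa [star_eq_conjTranspose, conjTranspose_eq_transpose_of_trivial] using
    hU.posDef_star_left_conjugate_iff.2 hA

theorem det_transpose_mul_mul (hU : IsUnit U) (A : Matrix ι ι ℤ) :
    (Uᵀ * A * U).det = A.det := by
  have : U.det ^ 2 = 1 := Int.isUnit_sq ((isUnit_iff_isUnit_det U).1 hU)
  rw [det_mul, det_mul, det_transpose]
  linear_combination A.det * this

theorem exists_isUnit_forall_apply_self_le (hA : A.PosDef) (i : ι) :
    ∃ U : Matrix ι ι ℤ, IsUnit U ∧
      ∀ V : Matrix ι ι ℤ, IsUnit V → ∀ j, (Uᵀ * A * U) i i ≤ (Vᵀ * A * V) j j := by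
  obtain ⟨⟨U, k⟩, hU, hmin⟩ := exists_minimalFor_of_wellFoundedLT
    (fun p : Matrix ι ι ℤ × ι ↦ IsUnit p.1) (fun p ↦ ((p.1ᵀ * A * p.1) p.2 p.2).toNat)
    ⟨(1, i), isUnit_one⟩
  refine ⟨U.submatrix (Equiv.refl ι) (Equiv.swap i k), (isUnit_submatrix_equiv _ _).2 hU,
    fun V hV j ↦ ?_⟩
  have hpos : 0 < (Vᵀ * A * V) j j := (posDef_transpose_mul_mul hV hA).diag_pos
  have hle : (Uᵀ * A * U) k k ≤ (Vᵀ * A * V) j j := by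
    have := le_of_not_gt fun h ↦ h.not_ge (hmin (j := (V, j)) hV h.le)
    dsimp only at this
    omega
  have col_swap : (U.submatrix (Equiv.refl ι) (Equiv.swap i k)).col i = U.col k := by ext; simp
  rwa [transpose_mul_mul_apply_self, col_swap, ← transpose_mul_mul_apply_self]

end Congruence

theorem exists_isUnit_col_succ_eq {W : Matrix (Fin n) (Fin n) ℤ} (hW : IsUnit W) (k : Fin n)
    (x : ℤ) :
    ∃ V : Matrix (Fin (n + 1)) (Fin (n + 1)) ℤ, IsUnit V ∧ V.col k.succ = vecCons x (W.col k) := by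
  refine ⟨of (vecCons (vecCons 1 (Pi.single k x)) fun i ↦ vecCons 0 (W i)), ?_, ?_⟩
  · rw [isUnit_iff_isUnit_det] at hW ⊢
    simpa [det_of_vecCons_vecCons_zero] using hW
  · ext i
    cases i using Fin.cases <;> simp

theorem three_mul_sq_le_of_forall_le {A : Matrix (Fin (n + 1)) (Fin (n + 1)) ℤ} (hA : A.PosDef)
    (hmin : ∀ V : Matrix (Fin (n + 1)) (Fin (n + 1)) ℤ, IsUnit V → ∀ j, A 0 0 ≤ (Vᵀ * A * V) j j)
    {W : Matrix (Fin n) (Fin n) ℤ} (hW : IsUnit W) (k : Fin n) :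
    3 * A 0 0 ^ 2 ≤ 4 * (Wᵀ * condense A * W) k k := by
  obtain ⟨x, hx⟩ := exists_four_mul_sq_le hA.diag_pos (vecTail (A 0) ⬝ᵥ W.col k)
  obtain ⟨V, hV, hcol⟩ := exists_isUnit_col_succ_eq hW k x
  have hle : A 0 0 * A 0 0 ≤ A 0 0 * (Vᵀ * A * V) k.succ k.succ :=
    mul_le_mul_of_nonneg_left (hmin V hV k.succ) hA.diag_pos.le
  rw [transpose_mul_mul_apply_self, hcol,
    mul_vecCons_dotProduct_mulVec (posDef_int_iff.1 hA).1, ← transpose_mul_mul_apply_self] at hle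
  linarith

theorem exists_isUnit_hermite_bound : ∀ {n : ℕ} {A : Matrix (Fin (n + 1)) (Fin (n + 1)) ℤ},
    A.PosDef → ∃ U : Matrix (Fin (n + 1)) (Fin (n + 1)) ℤ, IsUnit U ∧
      3 ^ (n + 1).choose 2 * (Uᵀ * A * U) 0 0 ^ (n + 1) ≤ 4 ^ (n + 1).choose 2 * A.det
  | 0, A, _ => ⟨1, isUnit_one, by simp⟩
  | n + 1, A, hA => by
    obtain ⟨U, hU, hmin⟩ := exists_isUnit_forall_apply_self_le hA 0
    set B := Uᵀ * A * U with B_def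
    have hB : B.PosDef := posDef_transpose_mul_mul hU hA
    obtain ⟨W, hW, hbound⟩ := exists_isUnit_hermite_bound (posDef_iff_posDef_condense.1 hB).2.2
    set b := (Wᵀ * condense B * W) 0 0
    have hab : 3 * B 0 0 ^ 2 ≤ 4 * b := three_mul_sq_le_of_forall_le hB
      (fun V hV j ↦ by simpa [B_def, mul_assoc] using hmin (U * V) (hU.mul hV) j) hW 0
    have ha : 0 < B 0 0 := hB.diag_pos
    have hdet : B 0 0 * (condense B).det = B 0 0 ^ (n + 1) * A.det := by
      rw [mul_det_condense, B_def, det_transpose_mul_mul hU]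
    refine ⟨U, hU, le_of_mul_le_mul_left ?_ (pow_pos ha (n + 1))⟩
    have hchoose : (n + 2).choose 2 = (n + 1) + (n + 1).choose 2 := by
      rw [Nat.choose_succ_succ' (n + 1) 1, Nat.choose_one_right]
    calc B 0 0 ^ (n + 1) * (3 ^ (n + 2).choose 2 * B 0 0 ^ (n + 2))
        = B 0 0 * 3 ^ (n + 1).choose 2 * (3 * B 0 0 ^ 2) ^ (n + 1) := by rw [hchoose]; ring
      _ ≤ B 0 0 * 3 ^ (n + 1).choose 2 * (4 * b) ^ (n + 1) := by gcongr
      _ = B 0 0 * 4 ^ (n + 1) * (3 ^ (n + 1).choose 2 * b ^ (n + 1)) := by ring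
      _ ≤ B 0 0 * 4 ^ (n + 1) * (4 ^ (n + 1).choose 2 * (condense B).det) := by gcongr
      _ = B 0 0 ^ (n + 1) * (4 ^ (n + 2).choose 2 * A.det) := by
        rw [hchoose]; linear_combination 4 ^ (n + 1) * 4 ^ (n + 1).choose 2 * hdet

-- In dimension `n + 1`, Hermite's bound `(4 / 3) ^ (n / 2)` is less than `2` only for `n ≤ 4`.
theorem exists_isUnit_apply_zero_eq_one (hn : n ≤ 4) {A : Matrix (Fin (n + 1)) (Fin (n + 1)) ℤ}
    (hA : A.PosDef) (hdet : A.det = 1) :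
    ∃ U : Matrix (Fin (n + 1)) (Fin (n + 1)) ℤ, IsUnit U ∧ (Uᵀ * A * U) 0 0 = 1 := by
  obtain ⟨U, hU, hbound⟩ := exists_isUnit_hermite_bound hA
  have hpos : 0 < (Uᵀ * A * U) 0 0 := (posDef_transpose_mul_mul hU hA).diag_pos
  refine ⟨U, hU, le_antisymm (not_lt.1 fun two_le ↦ ?_) hpos⟩
  have : 3 ^ (n + 1).choose 2 * 2 ^ (n + 1) ≤ (4 ^ (n + 1).choose 2 : ℤ) :=
    calc (3 ^ (n + 1).choose 2 * 2 ^ (n + 1) : ℤ)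
      _ ≤ 3 ^ (n + 1).choose 2 * (Uᵀ * A * U) 0 0 ^ (n + 1) := by gcongr; exact two_le
      _ ≤ 4 ^ (n + 1).choose 2 := by simpa [hdet] using hbound
  interval_cases n <;> simp [Nat.choose] at this

theorem eq_transpose_mul_self_of_condense_eq {A : Matrix (Fin (n + 1)) (Fin (n + 1)) ℤ}
    (hsymm : A.IsSymm) (h1 : A 0 0 = 1) {W : Matrix (Fin n) (Fin n) ℤ}
    (hW : condense A = Wᵀ * W) :
    ∃ V : Matrix (Fin (n + 1)) (Fin (n + 1)) ℤ, A = Vᵀ * V := by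
  refine ⟨of (vecCons (A 0) fun i ↦ vecCons 0 (W i)), ?_⟩
  ext i j
  have hcond (i j : Fin n) : A i.succ j.succ - A i.succ 0 * A 0 j.succ = ∑ k, W k i * W k j := by
    simpa [condense, h1, Matrix.mul_apply] using congr_fun₂ hW i j
  cases i using Fin.cases <;> cases j using Fin.cases <;>
    simp [Matrix.mul_apply, Fin.sum_univ_succ, h1, hsymm.apply 0 (Fin.succ _), ← hcond]

theorem exists_eq_transpose_mul_self : ∀ {n : ℕ}, n ≤ 5 → ∀ {A : Matrix (Fin n) (Fin n) ℤ},
    A.PosDef → A.det = 1 → ∃ V : Matrix (Fin n) (Fin n) ℤ, A = Vᵀ * V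
  | 0, _, A, _, _ => ⟨1, Subsingleton.elim _ _⟩
  | n + 1, hn, A, hA, hdet => by
    obtain ⟨U, hU, h1⟩ := exists_isUnit_apply_zero_eq_one (by omega) hA hdet
    obtain ⟨hsymm, -, hcond⟩ := posDef_iff_posDef_condense.1 (posDef_transpose_mul_mul hU hA)
    have det_cond : (condense (Uᵀ * A * U)).det = 1 := by
      simpa [h1, det_transpose_mul_mul hU, hdet] using mul_det_condense (Uᵀ * A * U)
    obtain ⟨W, hW⟩ := exists_eq_transpose_mul_self (by omega) hcond det_cond
    obtain ⟨V, hV⟩ := eq_transpose_mul_self_of_condense_eq hsymm h1 hW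
    refine ⟨V * U⁻¹, ?_⟩
    rw [isUnit_iff_isUnit_det] at hU
    rw [transpose_mul, mul_assoc, ← mul_assoc Vᵀ, ← hV]
    simp [hU, mul_assoc, transpose_nonsing_inv]

end HermiteReduction

theorem exists_posDef_det_eq_one_of_dvd {n d m : ℤ} (hd : 0 < d) (hpos : 0 < d * n - 1)
    (hdvd : d * n - 1 ∣ m ^ 2 + d) :
    ∃ A : Matrix (Fin 3) (Fin 3) ℤ, A.PosDef ∧ A.det = 1 ∧ A 2 2 = n := by
  obtain ⟨a, ha⟩ := hdvd
  have a_pos : 0 < a := pos_of_mul_pos_right (ha ▸ by positivity) hpos.le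
  let A : Matrix (Fin 3) (Fin 3) ℤ := !![a, m, 1; m, d * n - 1, 0; 1, 0, n]
  have det_eq_one : A.det = 1 := by
    rw [det_fin_three]
    simp only [A, of_apply, cons_val]
    linear_combination -n * ha
  have posDef : A.PosDef := by
    have condense_A : condense A = !![d, -m; -m, a * n - 1] := by
      ext i j
      fin_cases i <;> fin_cases j
      · change a * (d * n - 1) - m * m = d
        linear_combination -ha
      all_goals simp [condense, A]
    have condense_condense_A : condense (condense A) = diagonal fun _ : Fin 1 ↦ a := by
      rw [condense_A]
      ext i j
      fin_cases i; fin_cases j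
      change d * (a * n - 1) - -m * -m = a
      linear_combination -ha
    have symm_A : A.IsSymm := by ext i j; fin_cases i <;> fin_cases j <;> rfl
    rw [posDef_iff_posDef_condense, posDef_iff_posDef_condense, condense_condense_A, condense_A]
    exact ⟨symm_A, a_pos, condense_A ▸ isSymm_condense symm_A, hd,
      posDef_diagonal_iff.2 fun _ ↦ a_pos⟩
  exact ⟨A, posDef, det_eq_one, rfl⟩

/-- `n` is a sum of three squares of integers, any of which may be zero. -/
def IsSumThreeSq (n : ℤ) : Prop :=
  ∃ u v w : ℤ, u ^ 2 + v ^ 2 + w ^ 2 = n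

theorem isSumThreeSq_of_dvd {n d m : ℤ} (hd : 0 < d) (hpos : 0 < d * n - 1)
    (hdvd : d * n - 1 ∣ m ^ 2 + d) : IsSumThreeSq n := by
  obtain ⟨A, hA, hdet, rfl⟩ := exists_posDef_det_eq_one_of_dvd hd hpos hdvd
  obtain ⟨V, rfl⟩ := exists_eq_transpose_mul_self (by norm_num) hA hdet
  refine ⟨V 0 2, V 1 2, V 2 2, ?_⟩
  simp only [Matrix.mul_apply, Fin.sum_univ_three, transpose_apply, sq]

theorem exists_prime_mul_add_one_eq {k a c n : ℕ} (ha : Odd a) (h : k * a + 1 = c * n) :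
    ∃ p j : ℕ, p.Prime ∧ p % 4 = a % 4 ∧ k * p + 1 = (c + 4 * k * j) * n := by
  have hn : n ≠ 0 := by rintro rfl; omega
  have coprime_n : a.Coprime n := by
    rw [← Nat.isCoprime_iff_coprime]
    have h' : (k * a + 1 : ℤ) = c * n := mod_cast h
    exact ⟨-k, c, by linear_combination -h'⟩
  have coprime_four : a.Coprime 4 := (Nat.coprime_two_right.2 ha).pow_right 2
  obtain ⟨p, hlt, hp, hmod⟩ := Nat.forall_exists_prime_gt_and_modEq a (q := 4 * n) (by omega)
    (coprime_four.mul_right coprime_n)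
  obtain ⟨j, hj⟩ := (Nat.modEq_iff_dvd' hlt.le).1 hmod.symm
  obtain rfl : p = a + 4 * n * j := by omega
  refine ⟨_, j, hp, by rw [mul_assoc, Nat.add_mul_mod_self_left], ?_⟩
  linear_combination h

theorem exists_dvd_sq_add_of_jacobiSym_eq_one {p : ℕ} (hp : p.Prime) {d : ℤ}
    (h : J(-d | p) = 1) : ∃ m : ℤ, (p : ℤ) ∣ m ^ 2 + d := by
  have : Fact p.Prime := ⟨hp⟩
  obtain ⟨r, hr⟩ := ZMod.isSquare_of_jacobiSym_eq_one h
  obtain ⟨m, rfl⟩ := ZMod.intCast_surjective r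
  refine ⟨m, (ZMod.intCast_zmod_eq_zero_iff_dvd _ p).1 ?_⟩
  push_cast at hr ⊢
  linear_combination -hr

theorem exists_two_mul_dvd_sq_add {p d m : ℤ} (hp : Odd p) (hd : Odd d) (h : p ∣ m ^ 2 + d) :
    ∃ m' : ℤ, 2 * p ∣ m' ^ 2 + d := by
  obtain ⟨m', hm', hodd⟩ : ∃ m' : ℤ, p ∣ m' ^ 2 + d ∧ Odd m' := by
    rcases Int.even_or_odd m with heven | hodd
    · refine ⟨m + p, ?_, heven.add_odd hp⟩
      rw [show (m + p) ^ 2 + d = m ^ 2 + d + p * (2 * m + p) by ring]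
      exact dvd_add h (dvd_mul_right _ _)
    · exact ⟨m, h, hodd⟩
  exact ⟨m', (Int.isCoprime_two_left.2 hp).mul_dvd (hodd.pow.add_odd hd).two_dvd hm'⟩

theorem jacobiSym_neg_eq_one_of_add_one_eq {p d n : ℕ} (hp : p % 4 = 1) (hd : d % 4 = 1)
    (h : p + 1 = d * n) : J(-d | p) = 1 := by
  have p_odd : Odd p := Nat.odd_iff.2 (by omega)
  have d_odd : Odd d := Nat.odd_iff.2 (by omega)
  have p_modEq : (p : ℤ) ≡ -1 [ZMOD d] :=
    (Int.modEq_iff_dvd.2 ⟨n, by push_cast [← Nat.cast_mul, ← h]; ring⟩).symm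
  calc J(-d | p) = J(d | p) := by
        rw [jacobiSym.neg _ p_odd, ZMod.χ₄_nat_one_mod_four hp, one_mul]
    _ = J(p | d) := jacobiSym.quadratic_reciprocity_one_mod_four hd p_odd
    _ = J(-1 | d) := jacobiSym.mod_left' p_modEq
    _ = 1 := by rw [jacobiSym.at_neg_one d_odd, ZMod.χ₄_nat_one_mod_four hd]

theorem jacobiSym_eq_one_of_two_mul_add_one_eq {p d n : ℕ} (hd : d % 8 = 1 ∨ d % 8 = 3)
    (h : 2 * p + 1 = d * n) : J(p | d) = 1 := by
  have d_odd : Odd d := Nat.odd_iff.2 (by omega)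
  have neg_two : J(-2 | d) = 1 := by
    rw [jacobiSym.at_neg_two d_odd, ZMod.χ₈'_nat_eq_if_mod_eight, if_neg (by omega), if_pos hd]
  have modEq_one : -2 * (p : ℤ) ≡ 1 [ZMOD d] :=
    Int.modEq_iff_dvd.2 ⟨n, by push_cast [← Nat.cast_mul, ← h]; ring⟩
  calc J(p | d) = J(-2 * p | d) := by rw [jacobiSym.mul_left, neg_two, one_mul]
    _ = J(1 | d) := jacobiSym.mod_left' modEq_one
    _ = 1 := jacobiSym.one_left d

theorem jacobiSym_neg_eq_one_of_two_mul_add_one_eq {p d n : ℕ} (hd : d % 8 = 1 ∨ d % 8 = 3)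
    (hpd : p % 4 = 1 ∨ p % 4 = 3 ∧ d % 4 = 3) (h : 2 * p + 1 = d * n) : J(-d | p) = 1 := by
  have p_odd : Odd p := Nat.odd_iff.2 (by omega)
  have d_odd : Odd d := Nat.odd_iff.2 (by omega)
  have p_d : J(p | d) = 1 := jacobiSym_eq_one_of_two_mul_add_one_eq hd h
  rw [jacobiSym.neg _ p_odd]
  rcases hpd with hp | ⟨hp, hd⟩
  · rw [ZMod.χ₄_nat_one_mod_four hp, jacobiSym.quadratic_reciprocity_one_mod_four' d_odd hp, p_d,
      one_mul]
  · rw [ZMod.χ₄_nat_three_mod_four hp, jacobiSym.quadratic_reciprocity_three_mod_four hd hp, p_d,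
      neg_mul_neg, one_mul]

theorem isSumThreeSq_of_prime_add_one_eq {p d n : ℕ} (hp : p.Prime) (hp4 : p % 4 = 1)
    (hd4 : d % 4 = 1) (h : p + 1 = d * n) : IsSumThreeSq n := by
  obtain ⟨m, hm⟩ := exists_dvd_sq_add_of_jacobiSym_eq_one hp
    (jacobiSym_neg_eq_one_of_add_one_eq hp4 hd4 h)
  have p_eq : (d * n - 1 : ℤ) = p := by rw [← Nat.cast_mul, ← h]; simp
  exact isSumThreeSq_of_dvd (d := d) (by omega) (by omega) (p_eq ▸ hm)

theorem isSumThreeSq_of_two_mul_prime_add_one_eq {p d n : ℕ} (hp : p.Prime)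
    (hd : d % 8 = 1 ∨ d % 8 = 3) (hpd : p % 4 = 1 ∨ p % 4 = 3 ∧ d % 4 = 3)
    (h : 2 * p + 1 = d * n) : IsSumThreeSq n := by
  obtain ⟨m, hm⟩ := exists_dvd_sq_add_of_jacobiSym_eq_one hp
    (jacobiSym_neg_eq_one_of_two_mul_add_one_eq hd hpd h)
  obtain ⟨m', hm'⟩ := exists_two_mul_dvd_sq_add (Int.odd_iff.2 (by omega))
    (Int.odd_iff.2 (by omega)) hm
  have two_mul_p_eq : (d * n - 1 : ℤ) = 2 * p := by rw [← Nat.cast_mul, ← h]; simp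
  exact isSumThreeSq_of_dvd (d := d) (by omega) (by omega) (two_mul_p_eq ▸ hm')

theorem isSumThreeSq_of_mod_four_eq_two {n : ℕ} (hn : n % 4 = 2) : IsSumThreeSq n := by
  obtain ⟨p, j, hp, hp4, h⟩ := exists_prime_mul_add_one_eq (k := 1) (a := n - 1) (c := 1) (n := n)
    (Nat.odd_iff.2 (by omega)) (by omega)
  exact isSumThreeSq_of_prime_add_one_eq hp (d := 1 + 4 * 1 * j) (by omega) (by omega)
    (one_mul p ▸ h)

theorem isSumThreeSq_of_mod_eight_eq_three {n : ℕ} (hn : n % 8 = 3) : IsSumThreeSq n := by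
  obtain ⟨p, j, hp, hp4, h⟩ := exists_prime_mul_add_one_eq (k := 2) (a := n / 2) (c := 1) (n := n)
    (Nat.odd_iff.2 (by omega)) (by omega)
  exact isSumThreeSq_of_two_mul_prime_add_one_eq hp (by omega) (by omega) h

theorem isSumThreeSq_of_mod_four_eq_one {n : ℕ} (hn : n % 4 = 1) : IsSumThreeSq n := by
  obtain ⟨p, j, hp, hp4, h⟩ := exists_prime_mul_add_one_eq (k := 2) (a := 3 * n / 2) (c := 3)
    (n := n) (Nat.odd_iff.2 (by omega)) (by omega)
  exact isSumThreeSq_of_two_mul_prime_add_one_eq hp (by omega) (by omega) h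

theorem isSumThreeSq_of_mod {n : ℤ} (hpos : 0 < n) (h4 : n % 4 ≠ 0) (h7 : n % 8 ≠ 7) :
    IsSumThreeSq n := by
  lift n to ℕ using hpos.le
  obtain h | h | h : n % 4 = 2 ∨ n % 8 = 3 ∨ n % 4 = 1 := by omega
  · exact isSumThreeSq_of_mod_four_eq_two h
  · exact isSumThreeSq_of_mod_eight_eq_three h
  · exact isSumThreeSq_of_mod_four_eq_one h

theorem IsSumThreeSq.four_mul {n : ℤ} : IsSumThreeSq n → IsSumThreeSq (4 * n) := by
  rintro ⟨u, v, w, rfl⟩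
  exact ⟨2 * u, 2 * v, 2 * w, by ring⟩

-- The substitution is `3` times an orthogonal matrix, and `w' ≡ -(u + v + w)` modulo `3`.
theorem exists_nine_mul_eq_of_not_three_dvd {u v w : ℤ} (hw : ¬ 3 ∣ w) :
    ∃ u' v' w' : ℤ, u' ^ 2 + v' ^ 2 + w' ^ 2 = 9 * (u ^ 2 + v ^ 2 + w ^ 2) ∧ ¬ 3 ∣ w' := by
  wlog hsum : ¬ 3 ∣ u + v + w generalizing w
  · simpa using this (w := -w) (by omega) (by omega)
  exact ⟨2 * u + 2 * v - w, 2 * v + 2 * w - u, 2 * w + 2 * u - v, by ring, by omega⟩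

theorem IsSumThreeSq.exists_not_three_dvd {n : ℤ} (hn : n ≠ 0) (h : IsSumThreeSq n) :
    ∃ u v w : ℤ, u ^ 2 + v ^ 2 + w ^ 2 = n ∧ ¬ 3 ∣ w := by
  induction hk : n.natAbs using Nat.strong_induction_on generalizing n with
  | _ k ih =>
    obtain ⟨u, v, w, rfl⟩ := h
    by_cases hw : 3 ∣ w; swap
    · exact ⟨u, v, w, rfl, hw⟩
    by_cases hv : 3 ∣ v; swap
    · exact ⟨u, w, v, by ring, hv⟩
    by_cases hu : 3 ∣ u; swap
    · exact ⟨v, w, u, by ring, hu⟩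
    obtain ⟨⟨u, rfl⟩, ⟨v, rfl⟩, ⟨w, rfl⟩⟩ := hu, hv, hw
    have nine_mul : (3 * u) ^ 2 + (3 * v) ^ 2 + (3 * w) ^ 2 = 9 * (u ^ 2 + v ^ 2 + w ^ 2) := by ring
    obtain ⟨u', v', w', heq, hw'⟩ := ih _ (by omega) (by omega) ⟨u, v, w, rfl⟩ rfl
    rw [nine_mul, ← heq]
    exact exists_nine_mul_eq_of_not_three_dvd hw'

theorem exists_sum_four_sq_not_three_dvd_of_sub_sq {n s : ℤ} (hs : ¬ 3 ∣ s) (hpos : 0 < n - s ^ 2)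
    (h4 : (n - s ^ 2) % 4 ≠ 0) (h7 : (n - s ^ 2) % 8 ≠ 7) :
    ∃ u v w s : ℤ, u ^ 2 + v ^ 2 + w ^ 2 + s ^ 2 = n ∧ ¬ 3 ∣ w ∧ ¬ 3 ∣ s := by
  obtain ⟨u, v, w, h, hw⟩ := (isSumThreeSq_of_mod hpos h4 h7).exists_not_three_dvd hpos.ne'
  exact ⟨u, v, w, s, by rw [h, sub_add_cancel], hw, hs⟩

theorem exists_sum_four_sq_not_three_dvd {n : ℤ} (hn : 2 ≤ n) :
    ∃ u v w s : ℤ, u ^ 2 + v ^ 2 + w ^ 2 + s ^ 2 = n ∧ ¬ 3 ∣ w ∧ ¬ 3 ∣ s := by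
  induction hk : n.natAbs using Nat.strong_induction_on generalizing n with
  | _ k ih =>
    rcases eq_or_ne n 4 with rfl | hn4
    · exact ⟨1, 1, 1, 1, by norm_num, by norm_num, by norm_num⟩
    obtain ⟨m, rfl⟩ | h1 | h : 4 ∣ n ∨ n % 4 = 1 ∨ n % 4 = 2 ∨ n % 4 = 3 := by omega
    · obtain ⟨u, v, w, s, rfl, hw, hs⟩ := ih _ (by omega) (n := m) (by omega) rfl
      exact ⟨2 * u, 2 * v, 2 * w, 2 * s, by ring, by omega, by omega⟩
    · exact exists_sum_four_sq_not_three_dvd_of_sub_sq (s := 2) (by norm_num) (by omega) (by omega)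
        (by omega)
    · exact exists_sum_four_sq_not_three_dvd_of_sub_sq (s := 1) (by norm_num) (by omega) (by omega)
        (by omega)

/-- The generalized octagonal number `P₈(t)`, for an integer `t` of either sign. -/
def octagonal (t : ℤ) : ℤ :=
  3 * t ^ 2 - 2 * t

theorem octagonal_zero : octagonal 0 = 0 := rfl

theorem octagonal_one : octagonal 1 = 1 := rfl

theorem octagonal_neg_one : octagonal (-1) = 5 := rfl

theorem exists_three_mul_octagonal_add_one_eq_sq {w : ℤ} (hw : ¬ 3 ∣ w) :
    ∃ t : ℤ, 3 * octagonal t + 1 = w ^ 2 := by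
  obtain ⟨t, ht⟩ | ⟨t, ht⟩ : 3 ∣ w + 1 ∨ 3 ∣ 1 - w := by omega
  · exact ⟨t, by rw [octagonal, eq_sub_of_add_eq ht]; ring⟩
  · exact ⟨t, by rw [octagonal, ← sub_sub_self 1 w, ht]; ring⟩

theorem IsSumThreeSq.exists_sq_add_sq_add_three_mul_octagonal {n : ℤ} (hn : n ≠ 0)
    (h : IsSumThreeSq n) : ∃ x y t : ℤ, x ^ 2 + y ^ 2 + 3 * octagonal t + 1 = n := by
  obtain ⟨x, y, w, rfl, hw⟩ := h.exists_not_three_dvd hn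
  obtain ⟨t, ht⟩ := exists_three_mul_octagonal_add_one_eq_sq hw
  exact ⟨x, y, t, by rw [add_assoc, ht]⟩

theorem exists_isSumThreeSq_sub_mul_sq {α : ℤ} (hα : 0 < α) (hα6 : α ≤ 6) {n : ℤ} (hn : 0 < n) :
    ∃ z : ℤ, 0 < n - α * z ^ 2 ∧ IsSumThreeSq (n - α * z ^ 2) := by
  induction hk : n.natAbs using Nat.strong_induction_on generalizing n with
  | _ k ih =>
    obtain ⟨m, rfl⟩ | h7 | ⟨h4, h7⟩ : 4 ∣ n ∨ n % 8 = 7 ∨ n % 4 ≠ 0 ∧ n % 8 ≠ 7 := by omega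
    · obtain ⟨z, hpos, hsum⟩ := ih _ (by omega) (n := m) (by omega) rfl
      have four_mul_sub : 4 * m - α * (2 * z) ^ 2 = 4 * (m - α * z ^ 2) := by ring
      exact ⟨2 * z, by omega, four_mul_sub ▸ hsum.four_mul⟩
    · rcases eq_or_ne α 3 with rfl | hα3
      · rcases eq_or_ne n 7 with rfl | hn7
        · exact ⟨1, by norm_num, 2, 0, 0, by norm_num⟩
        · exact ⟨2, by omega, isSumThreeSq_of_mod (by omega) (by omega) (by omega)⟩
      · exact ⟨1, by omega, isSumThreeSq_of_mod (by omega) (by omega) (by omega)⟩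
    · exact ⟨0, by simpa, by simpa using isSumThreeSq_of_mod hn h4 h7⟩

theorem exists_isSumThreeSq_sub_octagonal {n : ℤ} (hn : 0 < n) :
    ∃ t : ℤ, 0 < n - octagonal t ∧ IsSumThreeSq (n - octagonal t) := by
  obtain h0 | h47 | ⟨h4, h7⟩ :
    n % 8 = 0 ∨ (n % 8 = 4 ∨ n % 8 = 7) ∨ n % 4 ≠ 0 ∧ n % 8 ≠ 7 := by omega
  · refine ⟨-1, ?_⟩
    rw [octagonal_neg_one]
    exact ⟨by omega, isSumThreeSq_of_mod (by omega) (by omega) (by omega)⟩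
  · refine ⟨1, ?_⟩
    rw [octagonal_one]
    exact ⟨by omega, isSumThreeSq_of_mod (by omega) (by omega) (by omega)⟩
  · exact ⟨0, by simpa [octagonal_zero] using ⟨hn, isSumThreeSq_of_mod hn h4 h7⟩⟩

theorem exists_isSumThreeSq_four_mul_sub_mul_octagonal {β : ℤ}
    (hβ : β = 1 ∨ β = 2 ∨ β = 4 ∨ β = 5 ∨ β = 6) {m : ℤ} (hm : 0 < m) :
    ∃ t : ℤ, 0 < 4 * m - β * octagonal t ∧ IsSumThreeSq (4 * m - β * octagonal t) := by
  rcases hβ with rfl | rfl | rfl | rfl | rfl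
  · simpa using exists_isSumThreeSq_sub_octagonal (n := 4 * m) (by omega)
  · refine ⟨1, ?_⟩
    rw [octagonal_one]
    exact ⟨by omega, isSumThreeSq_of_mod (by omega) (by omega) (by omega)⟩
  · obtain ⟨t, hpos, hsum⟩ := exists_isSumThreeSq_sub_octagonal hm
    exact ⟨t, by omega, mul_sub 4 m (octagonal t) ▸ hsum.four_mul⟩
  · obtain heven | h7 | ⟨hodd, h7⟩ : m % 2 = 0 ∨ m % 8 = 7 ∨ m % 4 ≠ 0 ∧ m % 8 ≠ 7 := by omega
    · refine ⟨1, ?_⟩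
      rw [octagonal_one]
      exact ⟨by omega, isSumThreeSq_of_mod (by omega) (by omega) (by omega)⟩
    · refine ⟨-1, ?_⟩
      rw [octagonal_neg_one]
      exact ⟨by omega, isSumThreeSq_of_mod (by omega) (by omega) (by omega)⟩
    · exact ⟨0, by simpa [octagonal_zero] using ⟨hm, (isSumThreeSq_of_mod hm hodd h7).four_mul⟩⟩
  · rcases eq_or_ne m 1 with rfl | hm1
    · exact ⟨0, by norm_num [octagonal_zero], 2, 0, 0, by norm_num [octagonal_zero]⟩
    · refine ⟨1, ?_⟩
      rw [octagonal_one]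
      exact ⟨by omega, isSumThreeSq_of_mod (by omega) (by omega) (by omega)⟩

theorem exists_isSumThreeSq_sub_mul_octagonal {β : ℤ}
    (hβ : β = 1 ∨ β = 2 ∨ β = 4 ∨ β = 5 ∨ β = 6) {n : ℤ} (hn : 0 < n) :
    ∃ t : ℤ, 0 < n - β * octagonal t ∧ IsSumThreeSq (n - β * octagonal t) := by
  obtain ⟨m, rfl⟩ | h7 | ⟨h4, h7⟩ : 4 ∣ n ∨ n % 8 = 7 ∨ n % 4 ≠ 0 ∧ n % 8 ≠ 7 := by omega
  · exact exists_isSumThreeSq_four_mul_sub_mul_octagonal hβ (by omega)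
  · refine ⟨1, ?_⟩
    rw [octagonal_one]
    exact ⟨by omega, isSumThreeSq_of_mod (by omega) (by omega) (by omega)⟩
  · exact ⟨0, by simpa [octagonal_zero] using ⟨hn, isSumThreeSq_of_mod hn h4 h7⟩⟩

theorem exists_sq_add_sq_add_mul_sq_add_three_mul_octagonal {α : ℤ} (hα : 0 < α) (hα6 : α ≤ 6)
    {N : ℤ} (hN : 0 ≤ N) : ∃ x y z t : ℤ, x ^ 2 + y ^ 2 + α * z ^ 2 + 3 * octagonal t = N := by
  obtain ⟨z, hpos, hsum⟩ := exists_isSumThreeSq_sub_mul_sq hα hα6 (Int.lt_add_one_of_le hN)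
  obtain ⟨x, y, t, h⟩ := hsum.exists_sq_add_sq_add_three_mul_octagonal hpos.ne'
  exact ⟨x, y, z, t, by linarith⟩

theorem exists_sq_add_sq_add_three_mul_octagonal_add_three_mul_octagonal {N : ℤ} (hN : 0 ≤ N) :
    ∃ x y z t : ℤ, x ^ 2 + y ^ 2 + 3 * octagonal z + 3 * octagonal t = N := by
  obtain ⟨x, y, w, s, h, hw, hs⟩ := exists_sum_four_sq_not_three_dvd (n := N + 2) (by omega)
  obtain ⟨z, hz⟩ := exists_three_mul_octagonal_add_one_eq_sq hw
  obtain ⟨t, ht⟩ := exists_three_mul_octagonal_add_one_eq_sq hs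
  exact ⟨x, y, z, t, by linarith⟩

theorem exists_sq_add_sq_add_three_mul_octagonal_add_mul_octagonal {β : ℤ} (hβ : 0 < β)
    (hβ6 : β ≤ 6) {N : ℤ} (hN : 0 ≤ N) :
    ∃ x y z t : ℤ, x ^ 2 + y ^ 2 + 3 * octagonal z + β * octagonal t = N := by
  rcases eq_or_ne β 3 with rfl | hβ3
  · exact exists_sq_add_sq_add_three_mul_octagonal_add_three_mul_octagonal hN
  · obtain ⟨t, hpos, hsum⟩ :=
      exists_isSumThreeSq_sub_mul_octagonal (β := β) (by omega) (Int.lt_add_one_of_le hN)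
    obtain ⟨x, y, z, h⟩ := hsum.exists_sq_add_sq_add_three_mul_octagonal hpos.ne'
    exact ⟨x, y, z, t, by linarith⟩

theorem universal_case_4_4_general :
    (∀ α : ℤ, 0 < α → α ≤ 6 → ∀ N : ℤ, 0 ≤ N →
      ∃ x y z t : ℤ,
        x ^ 2 + y ^ 2 + α * z ^ 2 + 3 * (3 * t ^ 2 - 2 * t) = N) ∧
    (∀ β : ℤ, 0 < β → β ≤ 6 → ∀ N : ℤ, 0 ≤ N →
      ∃ x y z t : ℤ,
        x ^ 2 + y ^ 2 + 3 * (3 * z ^ 2 - 2 * z) + β * (3 * t ^ 2 - 2 * t) = N) :=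
  ⟨fun _ hα hα6 _ hN ↦ exists_sq_add_sq_add_mul_sq_add_three_mul_octagonal hα hα6 hN,
    fun _ hβ hβ6 _ hN ↦ exists_sq_add_sq_add_three_mul_octagonal_add_mul_octagonal hβ hβ6 hN⟩

theorem universal_case_4_4 :
    (∀ α : ℤ, 4 ≤ α → α ≤ 6 → ∀ N : ℤ, 0 ≤ N →
      ∃ x y z t : ℤ,
        x ^ 2 + y ^ 2 + α * z ^ 2 + 3 * (3 * t ^ 2 - 2 * t) = N) ∧
    (∀ β : ℤ, 3 ≤ β → β ≤ 6 → ∀ N : ℤ, 0 ≤ N →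
      ∃ x y z t : ℤ,
        x ^ 2 + y ^ 2 + 3 * (3 * z ^ 2 - 2 * z) + β * (3 * t ^ 2 - 2 * t) = N) := by
  exact ⟨fun α hα ↦ universal_case_4_4_general.1 α (by omega),
    fun β hβ ↦ universal_case_4_4_general.2 β (by omega)⟩
end
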